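/- Fix integers n ≥ 2 and 0 < a < r. Let R be the set of tuples (e, f_1,…,f_{n−1}) with e : ℂ^a → ℂ^r an injective linear map and f_q : ℂ^r → ℂ^a linear maps satisfying f_q∘e = 0 for all q, and let GL(a,ℂ) act on R by g·(e, f_1,…,f_{n−1}) = (e∘g^{−1}, g∘f_1,…, g∘f_{n−1}). Then the map sending (e, f_1,…,f_{n−1}) to (W, φ_1,…,φ_{n−1}), where W = Im e and φ_q : ℂ^r/W → W is the map induced by the endomorphism e∘f_q of ℂ^r (which vanishes on W and has image contained in W), induces a bijection from the orbit space R/GL(a,ℂ) onto the set of tuples (W, φ_1,…,φ_{n−1}) with W an a-dimensional subspace of ℂ^r and each φ_q a linear map ℂ^r/W → W. -/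

import Mathlib

noncomputable section

/-- The set `R` of tuples `(e, f₁,…,f_{n−1})` with `e : ℂ^a → ℂ^r` injective and
`f_q : ℂ^r → ℂ^a` satisfying `f_q ∘ e = 0` for all `q`. -/
def Rep6 (n r a : ℕ) : Type :=
  {x : ((Fin a → ℂ) →ₗ[ℂ] (Fin r → ℂ)) × (Fin (n - 1) → (Fin r → ℂ) →ₗ[ℂ] (Fin a → ℂ)) //
    Function.Injective x.1 ∧ ∀ q, (x.2 q).comp x.1 = 0}

/-- The orbit relation of the `GL(a,ℂ)`-action
`g·(e, f₁,…,f_{n−1}) = (e∘g⁻¹, g∘f₁,…,g∘f_{n−1})`. -/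
def GLRel6 (n r a : ℕ) (x y : Rep6 n r a) : Prop :=
  ∃ g : (Fin a → ℂ) ≃ₗ[ℂ] (Fin a → ℂ),
    y.val.1 = x.val.1.comp g.symm.toLinearMap ∧
    ∀ q, y.val.2 q = g.toLinearMap.comp (x.val.2 q)

/-- The total space of `T^∨Gr(a,r)^{⊕(n−1)}`: tuples `(W, φ₁,…,φ_{n−1})` with `W` an
`a`-dimensional subspace of `ℂ^r` and each `φ_q : ℂ^r/W → W` linear. -/
def CotGrass6 (n r a : ℕ) : Type :=
  Σ W : {W : Submodule ℂ (Fin r → ℂ) // Module.finrank ℂ W = a},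
    Fin (n - 1) → ((Fin r → ℂ) ⧸ W.val) →ₗ[ℂ] W.val

theorem CotGrass6.ext_aux {n r a : ℕ} (p p' : CotGrass6 n r a) (h1 : p.1.val = p'.1.val)
    (h2 : ∀ (q : Fin (n - 1)) (w : Fin r → ℂ),
      (p.2 q (Submodule.Quotient.mk w) : Fin r → ℂ) = p'.2 q (Submodule.Quotient.mk w)) :
    p = p' := by
  obtain ⟨⟨W, hW⟩, φ⟩ := p
  obtain ⟨⟨W', hW'⟩, φ'⟩ := p'
  dsimp only at h1
  subst h1
  have : φ = φ' := by
    funext q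
    apply LinearMap.ext
    intro v
    obtain ⟨w, rfl⟩ := Submodule.Quotient.mk_surjective _ v
    exact Subtype.ext (h2 q w)
  rw [this]

/-- The map from tuples to the cotangent space. -/
def toCot6 {n r a : ℕ} (x : Rep6 n r a) : CotGrass6 n r a :=
  ⟨⟨LinearMap.range x.val.1, by
      rw [LinearMap.finrank_range_of_inj x.property.1]; simp⟩,
    fun q => (LinearMap.range x.val.1).liftQ (x.val.1.rangeRestrict.comp (x.val.2 q)) (by
      rintro _ ⟨v, rfl⟩
      have h := LinearMap.congr_fun (x.property.2 q) v
      simp only [LinearMap.comp_apply, LinearMap.zero_apply] at h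
      simp [LinearMap.mem_ker, h])⟩

theorem toCot6_fst {n r a : ℕ} (x : Rep6 n r a) :
    (toCot6 x).1.val = LinearMap.range x.val.1 := rfl

theorem toCot6_snd {n r a : ℕ} (x : Rep6 n r a) (q : Fin (n - 1)) (w : Fin r → ℂ) :
    ((toCot6 x).2 q (Submodule.Quotient.mk w) : Fin r → ℂ) = x.val.1 (x.val.2 q w) := rfl

theorem toCot6_rel {n r a : ℕ} (x y : Rep6 n r a) (h : GLRel6 n r a x y) :
    toCot6 x = toCot6 y := by
  obtain ⟨g, h1, h2⟩ := h
  apply CotGrass6.ext_aux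
  · rw [toCot6_fst, toCot6_fst, h1]
    exact (LinearMap.range_comp_of_range_eq_top _ g.symm.range).symm
  · intro q w
    rw [toCot6_snd, toCot6_snd, h1, h2]
    simp

theorem toCot6_inj {n r a : ℕ} (x y : Rep6 n r a) (h : toCot6 x = toCot6 y) :
    GLRel6 n r a x y := by
  have h1 : LinearMap.range x.val.1 = LinearMap.range y.val.1 := by
    rw [← toCot6_fst, ← toCot6_fst, h]
  have h2 : ∀ q w, x.val.1 (x.val.2 q w) = y.val.1 (y.val.2 q w) := by
    intro q w
    rw [← toCot6_snd, ← toCot6_snd, h]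
  let g := (LinearEquiv.ofInjective x.val.1 x.property.1).trans
    ((LinearEquiv.ofEq _ _ h1).trans (LinearEquiv.ofInjective y.val.1 y.property.1).symm)
  have hg : ∀ v, y.val.1 (g v) = x.val.1 v := by
    intro v
    have := LinearEquiv.apply_symm_apply (LinearEquiv.ofInjective y.val.1 y.property.1)
      (LinearEquiv.ofEq _ _ h1 (LinearEquiv.ofInjective x.val.1 x.property.1 v))
    exact congrArg Subtype.val this
  refine ⟨g, ?_, ?_⟩
  · apply LinearMap.ext
    intro v
    have := hg (g.symm v)
    rw [LinearEquiv.apply_symm_apply] at this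
    exact this
  · intro q
    apply LinearMap.ext
    intro w
    apply y.property.1
    rw [← h2]
    exact (hg _).symm

theorem toCot6_surj {n r a : ℕ} (p : CotGrass6 n r a) : ∃ x : Rep6 n r a, toCot6 x = p := by
  obtain ⟨⟨W, hW⟩, φ⟩ := p
  let i : (Fin a → ℂ) ≃ₗ[ℂ] W := LinearEquiv.ofFinrankEq _ _ (by simp [hW])
  let x : Rep6 n r a := ⟨(W.subtype.comp i.toLinearMap,
      fun q => i.symm.toLinearMap.comp ((φ q).comp W.mkQ)),
    Subtype.val_injective.comp i.injective, by
      intro q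
      apply LinearMap.ext
      intro v
      have : W.mkQ (i v : Fin r → ℂ) = 0 := by simp
      simp [this]⟩
  refine ⟨x, CotGrass6.ext_aux _ _ ?_ ?_⟩
  · rw [toCot6_fst]
    change LinearMap.range (W.subtype.comp i.toLinearMap) = W
    rw [LinearMap.range_comp_of_range_eq_top _ i.range, Submodule.range_subtype]
  · intro q w
    rw [toCot6_snd]
    change ((i (i.symm (φ q (W.mkQ w))) : W) : Fin r → ℂ) = _
    rw [LinearEquiv.apply_symm_apply]
    rfl

/-- Proposition 7.4 with Theorem 6.1: the map sending `(e, f₁,…,f_{n−1})`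
to `(W, φ₁,…,φ_{n−1})`, where `W = Im e` and `φ_q : ℂ^r/W → W` is induced by the
endomorphism `e∘f_q` of `ℂ^r`, induces a bijection from the orbit space `R/GL(a,ℂ)` onto
the set of tuples `(W, φ₁,…,φ_{n−1})`. -/
theorem minimal_moduli_equiv_cotangent_grassmannian (n r a : ℕ) (hn : 2 ≤ n)
    (ha : 0 < a) (har : a < r) :
    ∃ bij : Quot (GLRel6 n r a) ≃ CotGrass6 n r a,
      ∀ x : Rep6 n r a,
        (bij (Quot.mk _ x)).1.val = LinearMap.range x.val.1 ∧
        ∀ (q : Fin (n - 1)) (w : Fin r → ℂ),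
          ((bij (Quot.mk _ x)).2 q (Submodule.Quotient.mk w) : Fin r → ℂ)
            = x.val.1 (x.val.2 q w) := by
  refine ⟨Equiv.ofBijective (Quot.lift toCot6 toCot6_rel) ⟨?_, ?_⟩, ?_⟩
  · rintro ⟨x⟩ ⟨y⟩ h
    exact Quot.sound (toCot6_inj x y h)
  · intro p
    obtain ⟨x, hx⟩ := toCot6_surj p
    exact ⟨Quot.mk _ x, hx⟩
  · intro x
    exact ⟨toCot6_fst x, toCot6_snd x⟩

end
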